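/- Let n ≥ 1 be a natural number and let a ∈ L_T satisfy λ_{2n−1} ≺ a and ∫_0^T |a(x)| dx ≤ γ_{1,n}, where γ_{1,n} = T·λ_{2n−1} + (8πn(n+1)/T)·cot(nπ/(2(n+1))). Then the periodic problem u'' + a(x)u = 0 on (0,T), u(0) = u(T), u'(0) = u'(T), has only the trivial solution u ≡ 0. -/

import Mathlib

open MeasureTheory Set Real

/-- `u` is a solution of `u'' + a·u = 0` on `[c,d]`, with derivative function `v`. -/
def IsSolOn (a u v : ℝ → ℝ) (c d : ℝ) : Prop :=
  (∀ x ∈ Set.Icc c d, HasDerivWithinAt u (v x) (Set.Icc c d) x) ∧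
  (∀ x ∈ Set.Icc c d, v x = v c - ∫ t in c..x, a t * u t)

/-- Membership in `L_T`: measurable, `T`-periodic and integrable on `[0,T]`. -/
def MemLT (T : ℝ) (a : ℝ → ℝ) : Prop :=
  Measurable a ∧ (∀ x, a (x + T) = a x) ∧ IntegrableOn a (Set.Icc 0 T)

/-- `c ≺ d` : `c ≤ d` a.e. on `[0,T]` and `c < d` on a set of positive measure. -/
def Prec (T : ℝ) (c d : ℝ → ℝ) : Prop :=
  (∀ᵐ x ∂(volume.restrict (Set.Icc 0 T)), c x ≤ d x) ∧
  0 < volume {x ∈ Set.Icc 0 T | c x < d x}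

/-- `(u,v)` solves the periodic problem `u'' + a u = 0`, `u(0)=u(T)`, `u'(0)=u'(T)`. -/
def PeriodicSol (T : ℝ) (a u v : ℝ → ℝ) : Prop :=
  IsSolOn a u v 0 T ∧ u 0 = u T ∧ v 0 = v T

/-- `(u,v)` solves the antiperiodic problem `u'' + a u = 0`, `u(0)+u(T)=0`, `u'(0)+u'(T)=0`. -/
def AntiperiodicSol (T : ℝ) (a u v : ℝ → ℝ) : Prop :=
  IsSolOn a u v 0 T ∧ u 0 + u T = 0 ∧ v 0 + v T = 0

/-- The `(2n-1)`-st periodic eigenvalue `λ_{2n-1} = 4 n² π² / T²`. -/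
noncomputable def lam (T : ℝ) (n : ℕ) : ℝ := 4 * (n : ℝ) ^ 2 * Real.pi ^ 2 / T ^ 2

/-- The `(2n-1)`-st antiperiodic eigenvalue `λ̃_{2n-1} = (2n-1)² π² / T²`. -/
noncomputable def lamT (T : ℝ) (n : ℕ) : ℝ := (2 * (n : ℝ) - 1) ^ 2 * Real.pi ^ 2 / T ^ 2

/-- The set `Λ_n`. -/
def LambdaN (T : ℝ) (n : ℕ) : Set (ℝ → ℝ) :=
  {a | MemLT T a ∧ Prec T (fun _ => lam T n) a ∧
    ∃ u v : ℝ → ℝ, PeriodicSol T a u v ∧ ∃ x ∈ Set.Icc 0 T, u x ≠ 0}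

/-- The set `Λ̃_n`. -/
def LambdaTildeN (T : ℝ) (n : ℕ) : Set (ℝ → ℝ) :=
  {a | MemLT T a ∧ Prec T (fun _ => lamT T n) a ∧
    ∃ u v : ℝ → ℝ, AntiperiodicSol T a u v ∧ ∃ x ∈ Set.Icc 0 T, u x ≠ 0}

/-- The constant `β_{1,n}` of the periodic `L¹` Lyapunov inequality. -/
noncomputable def beta1 (T : ℝ) (n : ℕ) : ℝ :=
  8 * Real.pi * (n : ℝ) * ((n : ℝ) + 1) / T * Real.cot ((n : ℝ) * Real.pi / (2 * ((n : ℝ) + 1)))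

/-- The constant `β̃_{1,n}` of the antiperiodic `L¹` Lyapunov inequality. -/
noncomputable def betaT1 (T : ℝ) (n : ℕ) : ℝ :=
  2 * Real.pi * (2 * (n : ℝ) - 1) * (2 * (n : ℝ) + 1) / T *
    Real.cot ((2 * (n : ℝ) - 1) * Real.pi / (2 * (2 * (n : ℝ) + 1)))


/-- `f` is absolutely continuous on `[0,T]` with a.e. derivative `g`. -/
def ACD (T : ℝ) (f g : ℝ → ℝ) : Prop :=
  AbsolutelyContinuousOnInterval f 0 T ∧ ∀ᵐ x, x ∈ Set.uIcc 0 T → HasDerivAt f (g x) x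

theorem ACD.integrable {T : ℝ} {f g : ℝ → ℝ} (h : ACD T f g) :
    IntervalIntegrable g volume 0 T := by
  refine h.1.intervalIntegrable_deriv.congr_ae ?_
  rw [Filter.EventuallyEq, ae_restrict_iff' measurableSet_uIoc]
  filter_upwards [h.2] with x hx hx'
  exact (hx (uIoc_subset_uIcc hx')).deriv

theorem ACD.integral {T : ℝ} {f g : ℝ → ℝ} (h : ACD T f g) {c d : ℝ} (hc : c ∈ Set.uIcc 0 T)
    (hd : d ∈ Set.uIcc 0 T) :
    ∫ t in c..d, g t = f d - f c := by
  have hs : Set.uIcc c d ⊆ Set.uIcc 0 T := uIcc_subset_uIcc hc hd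
  rw [← (h.1.mono hs).integral_deriv_eq_sub]
  apply intervalIntegral.integral_congr_ae
  filter_upwards [h.2] with x hx hx'
  exact (hx (hs (uIoc_subset_uIcc hx'))).deriv.symm

theorem ACD.of_integrable {T : ℝ} {g : ℝ → ℝ} (h : IntervalIntegrable g volume 0 T) (c : ℝ) :
    ACD T (fun x => c + ∫ t in (0:ℝ)..x, g t) g := by
  constructor
  · have h1 : AbsolutelyContinuousOnInterval (fun _ : ℝ => c) 0 T :=
      (LipschitzOnWith.absolutelyContinuousOnInterval (K := 0)
        ((LipschitzWith.const c).lipschitzOnWith))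
    exact h1.fun_add (h.absolutelyContinuousOnInterval_intervalIntegral (by simp))
  · filter_upwards [h.ae_hasDerivAt_integral] with x hx hx'
    exact (hx hx' 0 (by simp)).const_add c

theorem AC_comp {T : ℝ} {f F : ℝ → ℝ} (hf : AbsolutelyContinuousOnInterval f 0 T)
    (hF : ContDiff ℝ 1 F) : AbsolutelyContinuousOnInterval (fun x => F (f x)) 0 T := by
  obtain ⟨C, hC⟩ := hf.exists_bound
  obtain ⟨K, hK⟩ := (hF.contDiffOn (s := Icc (-C) C)).exists_lipschitzOnWith (by decide)
    (convex_Icc _ _) isCompact_Icc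
  have hm : ∀ x ∈ Set.uIcc 0 T, f x ∈ Icc (-C) C := fun x hx => abs_le.1 (hC x hx)
  unfold AbsolutelyContinuousOnInterval at hf ⊢
  refine squeeze_zero' ?_ ?_ (by simpa using hf.const_mul (K : ℝ))
  · exact Filter.Eventually.of_forall fun E => Finset.sum_nonneg fun i _ => dist_nonneg
  · refine Filter.Eventually.filter_mono inf_le_right ?_
    rw [Filter.eventually_principal]
    intro E hE
    rw [Finset.mul_sum]
    refine Finset.sum_le_sum fun i hi => ?_
    exact hK.dist_le_mul _ (hm _ (hE.1 i hi).1) _ (hm _ (hE.1 i hi).2)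

theorem ACD.comp {T : ℝ} {f g F F' : ℝ → ℝ} (hf : ACD T f g) (hF : ContDiff ℝ 1 F)
    (hF' : ∀ x, HasDerivAt F (F' x) x) : ACD T (fun x => F (f x)) (fun x => F' (f x) * g x) := by
  refine ⟨AC_comp hf.1 hF, ?_⟩
  filter_upwards [hf.2] with x hx hx'
  exact (hF' (f x)).comp x (hx hx')

theorem ACD.mul {T : ℝ} {f g f' g' : ℝ → ℝ} (hf : ACD T f f') (hg : ACD T g g') :
    ACD T (fun x => f x * g x) (fun x => f' x * g x + f x * g' x) := by
  refine ⟨hf.1.fun_mul hg.1, ?_⟩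
  filter_upwards [hf.2, hg.2] with x hx hy hx'
  exact (hx hx').mul (hy hx')

theorem ACD.add {T : ℝ} {f g f' g' : ℝ → ℝ} (hf : ACD T f f') (hg : ACD T g g') :
    ACD T (fun x => f x + g x) (fun x => f' x + g' x) := by
  refine ⟨hf.1.fun_add hg.1, ?_⟩
  filter_upwards [hf.2, hg.2] with x hx hy hx'
  exact (hx hx').add (hy hx')

theorem ACD.sub {T : ℝ} {f g f' g' : ℝ → ℝ} (hf : ACD T f f') (hg : ACD T g g') :
    ACD T (fun x => f x - g x) (fun x => f' x - g' x) := by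
  refine ⟨hf.1.fun_sub hg.1, ?_⟩
  filter_upwards [hf.2, hg.2] with x hx hy hx'
  exact (hx hx').sub (hy hx')

theorem ACD.const_mul {T : ℝ} {f f' : ℝ → ℝ} (c : ℝ) (hf : ACD T f f') :
    ACD T (fun x => c * f x) (fun x => c * f' x) := by
  refine ⟨hf.1.const_mul c, ?_⟩
  filter_upwards [hf.2] with x hx hx'
  exact (hx hx').const_mul c

theorem ACD.congr {T : ℝ} {f f' f'' : ℝ → ℝ} (hf : ACD T f f')
    (h : ∀ x ∈ Set.uIcc 0 T, f' x = f'' x) : ACD T f f'' := by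
  refine ⟨hf.1, ?_⟩
  filter_upwards [hf.2] with x hx hx'
  exact h x hx' ▸ hx hx'

theorem ACD.exp_formula {T : ℝ} {f κ : ℝ → ℝ} (hf : ACD T f (fun x => κ x * f x))
    (hκ : IntervalIntegrable κ volume 0 T) :
    ∀ x ∈ Set.uIcc 0 T, f x = f 0 * Real.exp (∫ t in (0:ℝ)..x, κ t) := by
  have h1 := ((ACD.of_integrable hκ 0).const_mul (-1)).comp Real.contDiff_exp
    (fun x => Real.hasDerivAt_exp x)
  have h2 := hf.mul h1
  obtain ⟨C, hC⟩ := h2.1.const_of_ae_hasDerivAt_zero (by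
    filter_upwards [h2.2] with x hx hx'
    exact (hx hx').congr_deriv (by ring))
  intro x hx
  have e0 := hC 0 (by simp)
  have ex := hC x hx
  simp at e0
  rw [← e0] at ex
  rw [← ex, mul_assoc, ← Real.exp_add]
  simp

theorem W_integral (ω α : ℝ) (h0 : 0 < α) (h1 : α < π / 2) :
    ∫ y in (0:ℝ)..π, ω / max (Real.sin y ^ 2) (Real.sin α ^ 2)
      = 2 * α * ω / Real.sin α ^ 2 + 2 * ω * Real.cot α := by
  have hsα : 0 < Real.sin α := Real.sin_pos_of_pos_of_lt_pi h0 (by linarith)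
  have hcont : Continuous (fun y => ω / max (Real.sin y ^ 2) (Real.sin α ^ 2)) := by
    refine Continuous.div (by fun_prop) (by fun_prop) (fun y => ?_)
    have : 0 < Real.sin α ^ 2 := by positivity
    exact (lt_max_of_lt_right this).ne'
  have hI : ∀ c d, IntervalIntegrable (fun y => ω / max (Real.sin y ^ 2) (Real.sin α ^ 2))
    volume c d := fun c d => hcont.intervalIntegrable c d
  rw [← intervalIntegral.integral_add_adjacent_intervals (hI 0 α) (hI α π),
    ← intervalIntegral.integral_add_adjacent_intervals (hI α (π - α)) (hI (π - α) π)]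
  have e1 : ∫ y in (0:ℝ)..α, ω / max (Real.sin y ^ 2) (Real.sin α ^ 2)
      = α * (ω / Real.sin α ^ 2) := by
    rw [intervalIntegral.integral_congr (g := fun _ => ω / Real.sin α ^ 2)]
    · simp [mul_div_assoc]
    · intro y hy
      rw [uIcc_of_le h0.le] at hy
      have := Real.sin_le_sin_of_le_of_le_pi_div_two (by linarith [hy.1]) h1.le hy.2
      have h2 := Real.sin_nonneg_of_nonneg_of_le_pi hy.1 (by linarith [hy.2])
      simp only
      rw [max_eq_right (by gcongr)]
  have e3 : ∫ y in (π - α)..π, ω / max (Real.sin y ^ 2) (Real.sin α ^ 2)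
      = α * (ω / Real.sin α ^ 2) := by
    rw [← e1]
    have := intervalIntegral.integral_comp_sub_left (a := 0) (b := α)
      (fun y => ω / max (Real.sin y ^ 2) (Real.sin α ^ 2)) π
    simpa using this.symm
  have hpos : ∀ y ∈ Set.uIcc α (π - α), Real.sin α ≤ Real.sin y := by
    intro y hy
    rw [uIcc_of_le (by linarith)] at hy
    rcases le_total y (π / 2) with h | h
    · exact Real.sin_le_sin_of_le_of_le_pi_div_two (by linarith) h hy.1
    · rw [← Real.sin_pi_sub y]
      exact Real.sin_le_sin_of_le_of_le_pi_div_two (by linarith) (by linarith) (by linarith [hy.2])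
  have e2 : ∫ y in α..(π - α), ω / max (Real.sin y ^ 2) (Real.sin α ^ 2)
      = 2 * ω * Real.cot α := by
    rw [intervalIntegral.integral_eq_sub_of_hasDerivAt
      (f := fun y => -ω * (Real.cos y / Real.sin y)) _ (hI _ _)]
    · simp only [Real.cos_pi_sub, Real.sin_pi_sub, Real.cot_eq_cos_div_sin]
      ring
    · intro y hy
      have h2 := hpos y hy
      have h3 : Real.sin y ≠ 0 := by linarith
      rw [max_eq_left (by gcongr)]
      refine (((Real.hasDerivAt_cos y).div (Real.hasDerivAt_sin y) h3).const_mul (-ω)).congr_deriv ?_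
      field_simp
      linear_combination ω * Real.sin_sq_add_cos_sq y
  rw [e1, e2, e3]
  ring

theorem theta_bound (T ω : ℝ) (hT : 0 < T) (hω : 0 < ω) (n : ℕ) (hn : 1 ≤ n)
    (hωT : ω * T = 2 * π * n) (b θ : ℝ → ℝ)
    (hb : IntervalIntegrable b volume 0 T)
    (hb0 : ∀ᵐ x ∂(volume.restrict (Set.Icc 0 T)), 0 ≤ b x)
    (hbpos : 0 < volume {x ∈ Set.Icc 0 T | 0 < b x})
    (hθ : ACD T θ (fun x => ω + b x / ω * Real.sin (θ x) ^ 2))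
    (k : ℤ) (hk : θ T = θ 0 + k * (2 * π)) :
    4 * ω * (n + 1) * Real.cot (n * π / (2 * (n + 1))) < ∫ x in (0:ℝ)..T, b x := by
  have hn' : (1:ℝ) ≤ n := by exact_mod_cast hn
  have hπ := Real.pi_pos
  have hu : Set.uIcc 0 T = Set.Icc 0 T := uIcc_of_le hT.le
  have h0m : (0:ℝ) ∈ Set.uIcc 0 T := by simp
  have hTm : T ∈ Set.uIcc 0 T := by simp
  have hb0' : ∀ᵐ x ∂(volume.restrict (Set.Ioc 0 T)), 0 ≤ b x :=
    ae_restrict_of_ae_restrict_of_subset Ioc_subset_Icc_self hb0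
  have hθc : ContinuousOn θ (Set.uIcc 0 T) := hθ.1.continuousOn
  have hsub : ∀ {x y}, x ∈ Set.Icc 0 T → y ∈ Set.Icc 0 T → x < y → θ x < θ y := by
    intro x y hx hy hxy
    have hs : Set.uIcc x y ⊆ Set.uIcc 0 T := by rw [← hu] at hx hy; exact uIcc_subset_uIcc hx hy
    have e := hθ.integral (c := x) (d := y) (hu ▸ hx) (hu ▸ hy)
    have hle : ∫ t in x..y, ω ≤ ∫ t in x..y, (ω + b t / ω * Real.sin (θ t) ^ 2) := by
      refine intervalIntegral.integral_mono_ae_restrict hxy.le (by simp)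
        (hθ.integrable.mono_set hs) ?_
      filter_upwards [ae_restrict_of_ae_restrict_of_subset
        (Icc_subset_Icc hx.1 hy.2) hb0] with t ht
      have : 0 ≤ b t / ω * Real.sin (θ t) ^ 2 := by positivity
      linarith
    rw [e, intervalIntegral.integral_const, smul_eq_mul] at hle
    nlinarith [mul_pos (sub_pos.2 hxy) hω]
  have hinj : Set.InjOn θ (Set.Icc 0 T) := by
    intro x hx y hy hxy
    rcases lt_trichotomy x y with h | h | h
    · exact absurd hxy (hsub hx hy h).ne
    · exact h
    · exact absurd hxy (hsub hy hx h).ne'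
  have hbs : IntervalIntegrable (fun x => b x / ω * Real.sin (θ x) ^ 2) volume 0 T := by
    have := hθ.integrable.sub (intervalIntegrable_const (c := ω))
    simpa using this
  have hbsnn : ∀ᵐ x ∂(volume.restrict (Set.Ioc 0 T)), 0 ≤ b x / ω * Real.sin (θ x) ^ 2 := by
    filter_upwards [hb0'] with x hx
    positivity
  have hbspos : 0 < ∫ x in (0:ℝ)..T, b x / ω * Real.sin (θ x) ^ 2 := by
    rw [intervalIntegral.integral_pos_iff_support_of_nonneg_ae' (by
      rw [uIoc_of_le hT.le]; exact hbsnn) hbs]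
    refine ⟨hT, ?_⟩
    have hZ : ({x ∈ Set.Icc 0 T | Real.sin (θ x) = 0} ∪ {0}).Countable := by
      refine Set.Countable.union ?_ (Set.countable_singleton 0)
      refine Set.countable_of_injective_of_countable_image (f := θ) (hinj.mono (fun x hx => hx.1)) ?_
      refine (Set.countable_range (fun m : ℤ => (m : ℝ) * π)).mono ?_
      rintro _ ⟨x, hx, rfl⟩
      obtain ⟨m, hm⟩ := Real.sin_eq_zero_iff.1 hx.2
      exact ⟨m, hm⟩
    rw [← measure_sdiff_null (hZ.measure_zero volume)] at hbpos
    refine lt_of_lt_of_le hbpos (measure_mono ?_)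
    rintro x ⟨⟨hx, hbx⟩, hx2⟩
    simp only [Set.mem_union, Set.mem_ofPred_eq, Set.mem_singleton_iff, not_or, not_and] at hx2
    have hs := hx2.1 hx
    refine ⟨?_, lt_of_le_of_ne hx.1 (Ne.symm hx2.2), hx.2⟩
    simp only [Function.mem_support]
    positivity
  have hkn : (n : ℤ) + 1 ≤ k := by
    have e := hθ.integral h0m hTm
    rw [intervalIntegral.integral_add (by simp) hbs, hk] at e
    simp only [intervalIntegral.integral_const, smul_eq_mul] at e
    have : 2 * π * (n:ℝ) < 2 * π * k := by nlinarith
    have h2 : (n:ℝ) < k := lt_of_mul_lt_mul_left this (by positivity)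
    have : (n:ℤ) < k := by exact_mod_cast h2
    omega
  -- calibration
  set α : ℝ := n * π / (2 * (n + 1)) with hα
  have hα0 : 0 < α := by positivity
  have hα1 : α < π / 2 := by
    rw [hα, div_lt_div_iff₀ (by positivity) (by positivity)]
    nlinarith
  have hsα : 0 < Real.sin α := Real.sin_pos_of_pos_of_lt_pi hα0 (by linarith)
  set s := Real.sin α ^ 2 with hs
  have hs0 : 0 < s := by positivity
  have hs1 : s < 1 := by
    have : 0 < Real.cos α := Real.cos_pos_of_mem_Ioo ⟨by linarith, hα1⟩
    nlinarith [Real.sin_sq_add_cos_sq α, pow_pos this 2]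
  set W : ℝ → ℝ := fun y => ω / max (Real.sin y ^ 2) s with hW
  have hmax : ∀ y, 0 < max (Real.sin y ^ 2) s := fun y => lt_max_of_lt_right hs0
  have hWc : Continuous W :=
    Continuous.div (by fun_prop) (by fun_prop) (fun y => (hmax y).ne')
  have hWJ : ∫ y in (0:ℝ)..π, W y = 2 * α * ω / s + 2 * ω * Real.cot α :=
    W_integral ω α hα0 hα1
  have hcot : 0 ≤ Real.cot α := by
    rw [Real.cot_eq_cos_div_sin]
    exact div_nonneg (Real.cos_nonneg_of_mem_Icc ⟨by linarith, hα1.le⟩) hsα.le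
  have hJ0 : 0 ≤ ∫ y in (0:ℝ)..π, W y := by rw [hWJ]; positivity
  have hWI : ∀ c d, IntervalIntegrable W volume c d := fun c d => hWc.intervalIntegrable c d
  set V : ℝ → ℝ := fun y => ∫ t in (0:ℝ)..y, W t with hV
  have hVd : ∀ y, HasDerivAt V (W y) y := fun y =>
    (hWc.integral_hasStrictDerivAt 0 y).hasDerivAt
  have hVC : ContDiff ℝ 1 V := by
    rw [contDiff_one_iff_deriv]
    refine ⟨fun y => (hVd y).differentiableAt, ?_⟩
    rw [show deriv V = W from funext fun y => (hVd y).deriv]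
    exact hWc
  have hper : Function.Periodic W π := by
    intro y; simp [hW, Real.sin_add_pi]
  have hVθ := hθ.comp hVC hVd
  have eV := hVθ.integral h0m hTm
  have eV2 : V (θ T) - V (θ 0) = 2 * k * ∫ y in (0:ℝ)..π, W y := by
    have h1 := hper.intervalIntegral_add_zsmul_eq (2 * k) (θ 0) hWI
    rw [hper.intervalIntegral_add_eq (θ 0) 0, zero_add] at h1
    have h2 : θ 0 + (2 * k) • π = θ T := by rw [hk]; simp; ring
    rw [h2] at h1
    rw [hV]
    simp only
    rw [intervalIntegral.integral_interval_sub_left (hWI _ _) (hWI _ _), h1]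
    simp
  have hkJ : 2 * ((n:ℝ) + 1) * (∫ y in (0:ℝ)..π, W y) ≤ 2 * k * ∫ y in (0:ℝ)..π, W y := by
    have : (n:ℝ) + 1 ≤ k := by exact_mod_cast hkn
    gcongr
  -- strict positivity
  have hWθc : ContinuousOn (fun x => W (θ x)) (Set.uIcc 0 T) := hWc.comp_continuousOn hθc
  have hWle : ∀ y, W y * ω ≤ ω ^ 2 / s := by
    intro y
    have : W y ≤ ω / s := by
      simp only [hW]; gcongr; exact le_max_right _ _
    calc W y * ω ≤ ω / s * ω := by gcongr
      _ = _ := by ring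
  have hstrict : 0 < ∫ x in (0:ℝ)..T, (ω ^ 2 / s - W (θ x) * ω) := by
    refine intervalIntegral.integral_pos hT ?_ ?_ ?_
    · rw [← hu]; exact continuousOn_const.sub (hWθc.mul continuousOn_const)
    · intro x _; linarith [hWle (θ x)]
    · -- a point where the angle is an odd multiple of `π / 2`
      set m : ℤ := ⌈(θ 0 - π / 2) / π⌉ with hm
      have m1 : (θ 0 - π / 2) / π ≤ m := Int.le_ceil _
      have m2 : (m:ℝ) < (θ 0 - π / 2) / π + 1 := Int.ceil_lt_add_one _
      rw [div_le_iff₀ hπ] at m1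
      have m2' : (m:ℝ) * π < θ 0 - π / 2 + π := by
        have := mul_lt_mul_of_pos_right m2 hπ
        rwa [add_mul, div_mul_cancel₀ _ hπ.ne', one_mul] at this
      have hk1 : (1:ℝ) ≤ k := by
        have : (1:ℤ) ≤ k := by omega
        exact_mod_cast this
      have hmem : (m:ℝ) * π + π / 2 ∈ Set.Icc (θ 0) (θ T) := by
        constructor
        · linarith
        · rw [hk]; nlinarith
      obtain ⟨x, hx, hxe⟩ := intermediate_value_Icc hT.le (hu ▸ hθc) hmem
      refine ⟨x, hx, ?_⟩
      have hsin : Real.sin (θ x) ^ 2 = 1 := by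
        have : Real.cos (θ x) = 0 := by
          rw [hxe, Real.cos_add_pi_div_two, Real.sin_int_mul_pi, neg_zero]
        nlinarith [Real.sin_sq_add_cos_sq (θ x)]
      simp only [hW, hsin, max_eq_left hs1.le]
      have : ω ^ 2 / 1 < ω ^ 2 / s := by gcongr
      have e : ω / 1 * ω = ω ^ 2 / 1 := by ring
      rw [e]; linarith
  have hWωI : IntervalIntegrable (fun x => ω ^ 2 / s - W (θ x) * ω) volume 0 T :=
    (continuousOn_const.sub (hWθc.mul continuousOn_const)).intervalIntegrable
  have hcI : IntervalIntegrable (fun _ : ℝ => ω ^ 2 / s) volume 0 T := by simp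
  have hmain : ∫ x in (0:ℝ)..T, (ω ^ 2 / s - W (θ x) * ω) ≤
      ∫ x in (0:ℝ)..T, ((b x + ω ^ 2 / s) - W (θ x) * (ω + b x / ω * Real.sin (θ x) ^ 2)) := by
    refine intervalIntegral.integral_mono_ae_restrict hT.le hWωI
      ((hb.add hcI).sub hVθ.integrable) ?_
    filter_upwards [hb0] with x hx
    have h1 : W (θ x) * Real.sin (θ x) ^ 2 ≤ ω := by
      simp only [hW]
      rw [div_mul_eq_mul_div, div_le_iff₀ (hmax _)]
      gcongr; exact le_max_left _ _
    have h2 : W (θ x) * (b x / ω * Real.sin (θ x) ^ 2) ≤ b x := by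
      calc W (θ x) * (b x / ω * Real.sin (θ x) ^ 2)
          = b x / ω * (W (θ x) * Real.sin (θ x) ^ 2) := by ring
        _ ≤ b x / ω * ω := by gcongr
        _ = b x := by field_simp
    rw [mul_add]; linarith
  rw [intervalIntegral.integral_sub (hb.add hcI) hVθ.integrable,
    intervalIntegral.integral_add hb hcI, eV, eV2] at hmain
  simp only [intervalIntegral.integral_const, smul_eq_mul, sub_zero] at hmain
  rw [hWJ] at hmain hkJ
  have e4 : 2 * ((n:ℝ) + 1) * (2 * α * ω / s + 2 * ω * Real.cot α)
      = T * (ω ^ 2 / s) + 4 * ω * (n + 1) * Real.cot α := by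
    have : 4 * ((n:ℝ) + 1) * α = ω * T := by rw [hωT, hα]; field_simp; ring
    have h2 : 2 * ((n:ℝ) + 1) * (2 * α * ω / s + 2 * ω * Real.cot α)
      = (4 * ((n:ℝ) + 1) * α) * ω / s + 4 * ω * (n + 1) * Real.cot α := by ring
    rw [h2, this]; ring
  linarith

theorem prufer (T ω : ℝ) (hω : 0 < ω) (b u v : ℝ → ℝ)
    (hb : IntervalIntegrable b volume 0 T)
    (hu : ACD T u v) (hv : ACD T v (fun x => -(ω ^ 2 + b x) * u x))
    (hu0 : u 0 = u T) (hv0 : v 0 = v T) :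
    (∀ x ∈ Set.uIcc 0 T, u x = 0) ∨
    ∃ θ : ℝ → ℝ, ACD T θ (fun x => ω + b x / ω * Real.sin (θ x) ^ 2) ∧
      ∃ k : ℤ, θ T = θ 0 + k * (2 * π) := by
  have h0m : (0:ℝ) ∈ Set.uIcc 0 T := by simp
  have hTm : T ∈ Set.uIcc 0 T := by simp
  have huc := hu.1.continuousOn
  have hvc := hv.1.continuousOn
  set q : ℝ → ℝ := fun x => v x ^ 2 + ω ^ 2 * u x ^ 2 with hq
  set κ : ℝ → ℝ := fun x => b x * (-(u x * v x) / q x) with hκ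
  have hq0 : ∀ x, 0 ≤ q x := fun x => by simp only [hq]; positivity
  have hqz : ∀ x, q x = 0 → u x = 0 ∧ v x = 0 := by
    intro x hx
    simp only [hq] at hx
    have h1 : v x ^ 2 = 0 := by nlinarith [sq_nonneg (v x), mul_nonneg (sq_nonneg ω) (sq_nonneg (u x))]
    have h2 : ω ^ 2 * u x ^ 2 = 0 := by linarith
    constructor
    · have := (mul_eq_zero.1 h2).resolve_left (by positivity)
      exact pow_eq_zero_iff (two_ne_zero) |>.1 this
    · exact pow_eq_zero_iff (two_ne_zero) |>.1 h1
  have hm : ∀ {f : ℝ → ℝ}, ContinuousOn f (Set.uIcc 0 T) →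
      AEStronglyMeasurable f (volume.restrict (Set.uIoc 0 T)) := fun hf =>
    (hf.mono uIoc_subset_uIcc).aestronglyMeasurable measurableSet_uIoc
  have hκI : IntervalIntegrable κ volume 0 T := by
    rw [intervalIntegrable_iff] at hb ⊢
    refine Integrable.mul_bdd (c := 1 / ω) hb ?_ ?_
    · have h1 := (hm (huc.mul hvc).neg).aemeasurable
      have h2 := (hm ((hvc.pow 2).add (continuousOn_const.mul (huc.pow 2)) :
        ContinuousOn q _)).aemeasurable
      exact (h1.div h2).aestronglyMeasurable
    · refine Filter.Eventually.of_forall fun x => ?_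
      rw [Real.norm_eq_abs, abs_div, abs_neg, abs_of_nonneg (hq0 x)]
      rcases (hq0 x).eq_or_lt with h | h
      · rw [← h]; simp; exact hω.le
      · rw [div_le_div_iff₀ h hω]
        simp only [hq]
        rw [abs_mul, ← sq_abs (v x), ← sq_abs (u x)]
        nlinarith [sq_nonneg (|v x| - ω * |u x|), abs_nonneg (u x), abs_nonneg (v x),
          mul_nonneg hω.le (mul_nonneg (abs_nonneg (u x)) (abs_nonneg (v x)))]
  have hqA : ACD T q (fun x => (2 * κ x) * q x) := by
    have h := (hv.mul hv).add ((hu.mul hu).const_mul (ω ^ 2))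
    have e : q = fun x => v x * v x + ω ^ 2 * (u x * u x) := by
      funext x; simp only [hq]; ring
    rw [← e] at h
    refine h.congr fun x _ => ?_
    simp only [hκ]
    by_cases h0 : q x = 0
    · obtain ⟨h1, h2⟩ := hqz x h0
      simp [h1, h2]
    · have : b x * (-(u x * v x) / q x) * q x = - (b x * (u x * v x)) := by
        field_simp
      linear_combination (-2) * this
  have hqf := hqA.exp_formula (hκI.const_mul 2)
  by_cases hR : q 0 = 0
  · left
    intro x hx
    have := hqf x hx
    rw [hR, zero_mul] at this
    exact (hqz x this).1
  right
  have hqpos : ∀ x ∈ Set.uIcc 0 T, 0 < q x := by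
    intro x hx
    rw [hqf x hx]
    have : 0 < q 0 := lt_of_le_of_ne (hq0 0) (Ne.symm hR)
    positivity
  -- the angle
  set p : ℝ → ℝ := fun x => ω + b x * (ω * u x ^ 2 / q x) with hp
  have hpI : IntervalIntegrable p volume 0 T := by
    refine (intervalIntegrable_const).add (hb.mul_continuousOn ?_)
    refine ContinuousOn.div (continuousOn_const.mul (huc.pow 2))
      ((hvc.pow 2).add (continuousOn_const.mul (huc.pow 2))) (fun x hx => (hqpos x hx).ne')
  set z : ℂ := ⟨v 0, ω * u 0⟩ with hz
  set θ : ℝ → ℝ := fun x => z.arg + ∫ t in (0:ℝ)..x, p t with hθ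
  have hθA : ACD T θ p := ACD.of_integrable hpI z.arg
  have hθ0 : θ 0 = z.arg := by simp [hθ]
  have hc0 : ‖z‖ * Real.cos (θ 0) = v 0 := by rw [hθ0, Complex.norm_mul_cos_arg]
  have hs0 : ‖z‖ * Real.sin (θ 0) = ω * u 0 := by rw [hθ0, Complex.norm_mul_sin_arg]
  have hz0 : 0 < ‖z‖ := by
    rw [norm_pos_iff]
    intro h
    have h1 : v 0 = 0 := congrArg Complex.re h
    have h2 : ω * u 0 = 0 := congrArg Complex.im h
    have h3 : u 0 = 0 := (mul_eq_zero.1 h2).resolve_left hω.ne'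
    exact hR (by simp [hq, h1, h3])
  have hcos := hθA.comp Real.contDiff_cos (fun x => Real.hasDerivAt_cos x)
  have hsin := hθA.comp Real.contDiff_sin (fun x => Real.hasDerivAt_sin x)
  have hP : ACD T (fun x => ω * (u x * Real.cos (θ x)) - v x * Real.sin (θ x))
      (fun x => κ x * (ω * (u x * Real.cos (θ x)) - v x * Real.sin (θ x))) := by
    refine (((hu.mul hcos).const_mul ω).sub (hv.mul hsin)).congr fun x hx => ?_
    have hqx := (hqpos x hx).ne'
    simp only [hp, hκ]
    field_simp
    simp only [hq]
    ring
  have hQ : ACD T (fun x => ω * (u x * Real.sin (θ x)) + v x * Real.cos (θ x))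
      (fun x => κ x * (ω * (u x * Real.sin (θ x)) + v x * Real.cos (θ x))) := by
    refine (((hu.mul hsin).const_mul ω).add (hv.mul hcos)).congr fun x hx => ?_
    have hqx := (hqpos x hx).ne'
    simp only [hp, hκ]
    field_simp
    simp only [hq]
    ring
  have hPf := hP.exp_formula hκI
  have hQf := hQ.exp_formula hκI
  have hP0 : ω * (u 0 * Real.cos (θ 0)) - v 0 * Real.sin (θ 0) = 0 := by
    rw [← mul_assoc, ← hs0, ← hc0]; ring
  have hQ0 : ω * (u 0 * Real.sin (θ 0)) + v 0 * Real.cos (θ 0) = ‖z‖ := by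
    rw [← mul_assoc, ← hs0, ← hc0]
    linear_combination ‖z‖ * Real.sin_sq_add_cos_sq (θ 0)
  simp only [hP0, zero_mul] at hPf
  simp only [hQ0] at hQf
  set Q : ℝ → ℝ := fun x => ω * (u x * Real.sin (θ x)) + v x * Real.cos (θ x) with hQdef
  have hQpos : ∀ x ∈ Set.uIcc 0 T, 0 < Q x := by
    intro x hx
    simp only [hQdef]
    rw [hQf x hx]
    positivity
  have hus : ∀ x ∈ Set.uIcc 0 T, ω * u x = Q x * Real.sin (θ x) := by
    intro x hx
    simp only [hQdef]
    linear_combination Real.cos (θ x) * hPf x hx - ω * u x * Real.sin_sq_add_cos_sq (θ x)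
  have hvs : ∀ x ∈ Set.uIcc 0 T, v x = Q x * Real.cos (θ x) := by
    intro x hx
    simp only [hQdef]
    linear_combination -Real.sin (θ x) * hPf x hx - v x * Real.sin_sq_add_cos_sq (θ x)
  have hqQ : ∀ x ∈ Set.uIcc 0 T, q x = Q x ^ 2 := by
    intro x hx
    have : q x = v x ^ 2 + (ω * u x) ^ 2 := by simp only [hq]; ring
    rw [this, hus x hx, hvs x hx]
    linear_combination Q x ^ 2 * Real.sin_sq_add_cos_sq (θ x)
  refine ⟨θ, hθA.congr fun x hx => ?_, ?_⟩
  · simp only [hp]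
    have hQx := (hQpos x hx).ne'
    have e : u x = Q x * Real.sin (θ x) / ω := by rw [← hus x hx]; field_simp
    rw [hqQ x hx, e]
    field_simp
  · have hQT : Q T = Q 0 := by
      have : Q T ^ 2 = Q 0 ^ 2 := by
        rw [← hqQ T hTm, ← hqQ 0 h0m]; simp only [hq, hu0, hv0]
      exact (pow_left_inj₀ (hQpos T hTm).le (hQpos 0 h0m).le two_ne_zero).1 this
    have hQ00 := hQpos 0 h0m
    have hss : Real.sin (θ T) = Real.sin (θ 0) := by
      have h1 := hus T hTm
      rw [← hu0, hus 0 h0m, hQT] at h1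
      exact (mul_left_cancel₀ hQ00.ne' h1).symm
    have hcc : Real.cos (θ T) = Real.cos (θ 0) := by
      have h1 := hvs T hTm
      rw [← hv0, hvs 0 h0m, hQT] at h1
      exact (mul_left_cancel₀ hQ00.ne' h1).symm
    have : Real.cos (θ T - θ 0) = 1 := by
      rw [Real.cos_sub, hss, hcc]
      linear_combination Real.sin_sq_add_cos_sq (θ 0)
    obtain ⟨k, hk⟩ := (Real.cos_eq_one_iff _).1 this
    exact ⟨k, by linarith⟩

theorem stmt6 (T : ℝ) (hT : 0 < T) (n : ℕ) (hn : 1 ≤ n)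
    (a : ℝ → ℝ) (hLT : MemLT T a)
    (hprec : Prec T (fun _ => lam T n) a)
    (hnorm : (∫ x in (0:ℝ)..T, |a x|) ≤ T * lam T n + beta1 T n) :
    ∀ u v : ℝ → ℝ, PeriodicSol T a u v → ∀ x ∈ Set.Icc 0 T, u x = 0 := by
  rintro u v ⟨⟨hu, hv⟩, hu0, hv0⟩
  obtain ⟨-, -, haI⟩ := hLT
  obtain ⟨hle, hpos⟩ := hprec
  have hn' : (1:ℝ) ≤ n := by exact_mod_cast hn
  have hπ := Real.pi_pos
  have huI : Set.uIcc 0 T = Set.Icc 0 T := uIcc_of_le hT.le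
  have haI' : IntervalIntegrable a volume 0 T := by
    rw [intervalIntegrable_iff_integrableOn_Icc_of_le hT.le]; exact haI
  have huc : ContinuousOn u (Set.Icc 0 T) := fun x hx => (hu x hx).continuousWithinAt
  have hauI : IntervalIntegrable (fun x => a x * u x) volume 0 T :=
    haI'.mul_continuousOn (huI ▸ huc)
  set w : ℝ → ℝ := fun x => v 0 + ∫ t in (0:ℝ)..x, -(a t * u t) with hw
  have hwA : ACD T w (fun x => -(a x * u x)) := ACD.of_integrable hauI.neg (v 0)
  have hvw : ∀ x ∈ Set.Icc 0 T, v x = w x := by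
    intro x hx
    rw [hv x hx]
    simp only [hw, intervalIntegral.integral_neg]
    ring
  set ω : ℝ := 2 * n * π / T with hω
  have hω0 : 0 < ω := by positivity
  have hlam : lam T n = ω ^ 2 := by rw [lam, hω]; ring
  set b : ℝ → ℝ := fun x => a x - ω ^ 2 with hb
  have hbI : IntervalIntegrable b volume 0 T := haI'.sub intervalIntegrable_const
  have huA : ACD T u w := by
    constructor
    · obtain ⟨C, hC⟩ := hwA.1.exists_bound
      refine LipschitzOnWith.absolutelyContinuousOnInterval (K := C.toNNReal) ?_
      rw [huI] at hC ⊢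
      refine Convex.lipschitzOnWith_of_nnnorm_hasDerivWithin_le (convex_Icc 0 T) hu ?_
      intro x hx
      rw [hvw x hx]
      rw [← norm_toNNReal]; exact Real.toNNReal_le_toNNReal (hC x hx)
    · have h0 : ∀ᵐ x : ℝ, x ≠ 0 := by simp [ae_iff, measure_singleton]
      have h1 : ∀ᵐ x : ℝ, x ≠ T := by simp [ae_iff, measure_singleton]
      filter_upwards [h0, h1] with x hx0 hx1 hx
      rw [huI] at hx
      rw [← hvw x hx]
      exact (hu x hx).hasDerivAt (Icc_mem_nhds (lt_of_le_of_ne hx.1 (Ne.symm hx0))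
        (lt_of_le_of_ne hx.2 hx1))
  have hwA' : ACD T w (fun x => -(ω ^ 2 + b x) * u x) :=
    hwA.congr fun x _ => by simp only [hb]; ring
  rcases prufer T ω hω0 b u w hbI huA hwA' hu0
    (by rw [← hvw 0 ⟨le_rfl, hT.le⟩, ← hvw T ⟨hT.le, le_rfl⟩, hv0]) with h | ⟨θ, hθ, k, hk⟩
  · exact fun x hx => h x (huI ▸ hx)
  exfalso
  have hωT : ω * T = 2 * π * n := by rw [hω]; field_simp
  have hlt := theta_bound T ω hT hω0 n hn hωT b θ hbI
    (by filter_upwards [hle] with x hx; rw [hlam] at hx; simp only [hb]; linarith)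
    (by
      refine lt_of_lt_of_le hpos (measure_mono ?_)
      rintro x ⟨hx, hx2⟩
      rw [hlam] at hx2
      exact ⟨hx, by simp only [hb]; linarith⟩) hθ k hk
  have hab : ∫ x in (0:ℝ)..T, b x = (∫ x in (0:ℝ)..T, a x) - T * ω ^ 2 := by
    simp only [hb]
    rw [intervalIntegral.integral_sub haI' intervalIntegrable_const]
    simp
  have habs : ∫ x in (0:ℝ)..T, a x ≤ ∫ x in (0:ℝ)..T, |a x| :=
    intervalIntegral.integral_mono_on hT.le haI' haI'.abs fun x _ => le_abs_self _
  have hbeta : beta1 T n = 4 * ω * (n + 1) * Real.cot (n * π / (2 * (n + 1))) := by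
    rw [beta1, hω]; ring
  rw [hlam] at hnorm
  linarith
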